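/- Let (E, τ) be a violator space: E is a finite set and τ : 2^E → 2^E satisfies C1 (X ⊆ τ(X) for all X ⊆ E) and C22 (F ⊆ G ⊆ τ(F) implies τ(G) = τ(F)). Then (E, τ) is uniquely generated if and only if for every X ⊆ E, τ(X) = τ(ex(X)), where ex(X) is the set of extreme points of X. -/

import Mathlib

/-- `B` is a basis of `X` w.r.t. `τ`: a generator of `X` minimal under inclusion. -/
def IsBasis {α : Type*} (τ : Finset α → Finset α) (X B : Finset α) : Prop :=
  τ B = τ X ∧ ∀ B' : Finset α, τ B' = τ X → B' ⊆ B → B' = B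

/-- The set of extreme points of `X`: elements x ∈ X with x ∉ τ(X \ {x}). -/
def extremePoints {α : Type*} [DecidableEq α] (τ : Finset α → Finset α)
    (X : Finset α) : Finset α :=
  X.filter (fun x => x ∉ τ (X.erase x))

theorem exists_basis_sub {α : Type*} (τ : Finset α → Finset α) (X : Finset α) :
    ∀ Y : Finset α, τ Y = τ X → ∃ B, B ⊆ Y ∧ IsBasis τ X B := by
  intro Y
  induction Y using Finset.strongInduction with
  | H Y ih =>
    intro hY
    by_cases h : ∃ Z, Z ⊂ Y ∧ τ Z = τ X
    · obtain ⟨Z, hZ, hZX⟩ := h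
      obtain ⟨B, hB, hb⟩ := ih Z hZ hZX
      exact ⟨B, hB.trans hZ.subset, hb⟩
    · refine ⟨Y, subset_rfl, hY, fun B' h1 h2 => ?_⟩
      by_contra hne
      exact h ⟨B', lt_of_le_of_ne h2 hne, h1⟩

/-- A violator space (C1 + C22) is uniquely generated iff
τ(X) = τ(ex(X)) for every X (Krein–Milman property). -/
theorem violator_uniquelyGenerated_iff_kreinMilman {α : Type*} [Fintype α] [DecidableEq α]
    (τ : Finset α → Finset α)
    (hC1 : ∀ X : Finset α, X ⊆ τ X)
    (hC22 : ∀ F G : Finset α, F ⊆ G → G ⊆ τ F → τ G = τ F) :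
    (∀ X : Finset α, ∃! B : Finset α, IsBasis τ X B) ↔
    (∀ X : Finset α, τ X = τ (extremePoints τ X)) := by
  constructor
  · intro h X
    obtain ⟨B, hB, huniq⟩ := h X
    have hmin : ∀ Y, τ Y = τ X → B ⊆ Y := by
      intro Y hY
      obtain ⟨C, hC, hb⟩ := exists_basis_sub τ X Y hY
      rw [← huniq C hb]
      exact hC
    have hBe : B ⊆ extremePoints τ X := by
      intro x hx
      refine Finset.mem_filter.2 ⟨hmin X rfl hx, fun hxt => ?_⟩
      have hs : X ⊆ τ (X.erase x) := by
        intro y hy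
        by_cases hyx : y = x
        · rw [hyx]; exact hxt
        · exact hC1 _ (Finset.mem_erase.2 ⟨hyx, hy⟩)
      have := hmin _ (hC22 _ _ (Finset.erase_subset x X) hs).symm hx
      simp at this
    have h1 : extremePoints τ X ⊆ τ B := by
      rw [hB.1]
      exact (Finset.filter_subset _ _).trans (hC1 X)
    rw [hC22 _ _ hBe h1, hB.1]
  · intro h X
    obtain ⟨B, -, hB⟩ := exists_basis_sub τ X X rfl
    refine ⟨B, hB, fun C hC => ?_⟩
    have hU : B ∪ C ⊆ τ X := Finset.union_subset (hB.1 ▸ hC1 B) (hC.1 ▸ hC1 C)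
    have hUX : τ (B ∪ C) = τ X := by
      rw [← hB.1]
      exact hC22 _ _ Finset.subset_union_left (by rw [hB.1]; exact hU)
    have key : ∀ D, D ⊆ B ∪ C → IsBasis τ X D → extremePoints τ (B ∪ C) = D := by
      intro D hD hDb
      refine hDb.2 _ ((h _).symm.trans hUX) fun x hx => ?_
      by_contra hxD
      obtain ⟨hxU, hxt⟩ := Finset.mem_filter.1 hx
      apply hxt
      have hs : D ⊆ (B ∪ C).erase x := Finset.subset_erase.2 ⟨hD, hxD⟩
      rw [hC22 D _ hs (by rw [hDb.1]; exact (Finset.erase_subset _ _).trans hU), hDb.1]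
      exact hU hxU
    exact (key C Finset.subset_union_right hC).symm.trans (key B Finset.subset_union_left hB)
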